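/- arXiv:math/0408181 — 4 statements merged into one kernel-verified Lean document; each statement's English description precedes it below -/
import Mathlib

section
/- Let k be a field, n a positive integer, and R = k[X]/(X^n). Let B be a finite-dimensional R-module and A ⊆ B an R-submodule with X^{n−1}·A ≠ 0. Then the pair (A, B) has a direct summand isomorphic to (R, R): there exists b ∈ A with X^{n−1}·b ≠ 0 such that the cyclic submodule C = R·b satisfies C ⊆ A, and there is an R-submodule B' ⊆ B with B = C ⊕ B' and A = C ⊕ (A ∩ B'). In particular, every indecomposable pair (A, B) with X^{n−1}·A ≠ 0 is isomorphic to (R, R); equivalently, (R, R) is the only indecomposable object of S(k[T]/T^n) that does not lie in S_{n−1}(k[T]/T^n). -/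
open Polynomial

noncomputable section

/-- An object of the submodule category `Sₘ(k[T]/Tⁿ)`: a pair `(A, B)` where `B` is a
finite-dimensional module over `R = k[X]/(Xⁿ)` — encoded as a finite `k[X]`-module
annihilated by `Xⁿ` — together with an `R`-submodule `A ⊆ B` with `Xᵐ • A = 0`. -/
structure SPair (k : Type) [Field k] (m n : ℕ) : Type 1 where
  B : Type
  [addCommGroup : AddCommGroup B]
  [module : Module (Polynomial k) B]
  [finite : Module.Finite (Polynomial k) B]
  bound : ∀ b : B, (X : Polynomial k) ^ n • b = 0
  A : Submodule (Polynomial k) B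
  subBound : ∀ a ∈ A, (X : Polynomial k) ^ m • a = 0

attribute [instance] SPair.addCommGroup SPair.module SPair.finite

namespace SPair

variable {k : Type} [Field k] {m n : ℕ}

/-- Isomorphism of pairs: an `R`-linear isomorphism of the ambient modules mapping the one
submodule onto the other. -/
def Iso (M N : SPair k m n) : Prop :=
  ∃ e : M.B ≃ₗ[Polynomial k] N.B, M.A.map e.toLinearMap = N.A

/-- A pair `(A, B)` is indecomposable if `B ≠ 0` and for every internal direct sum
decomposition `B = B₁ ⊕ B₂` with `A = (A ∩ B₁) ⊕ (A ∩ B₂)`, one of `B₁`, `B₂` is zero. -/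
def Indec (M : SPair k m n) : Prop :=
  (∃ b : M.B, b ≠ 0) ∧
    ∀ B₁ B₂ : Submodule (Polynomial k) M.B,
      B₁ ⊓ B₂ = ⊥ → B₁ ⊔ B₂ = ⊤ → M.A = M.A ⊓ B₁ ⊔ M.A ⊓ B₂ → B₁ = ⊥ ∨ B₂ = ⊥

end SPair

/-- The cyclic module `k[X]/(Xⁱ)`, as a module over `k[X]`. -/
abbrev Bq (k : Type) [Field k] (i : ℕ) : Type :=
  Polynomial k ⧸ (Ideal.span {(X : Polynomial k) ^ i} : Ideal (Polynomial k))

instance (k : Type) [Field k] (i : ℕ) : Module.Finite (Polynomial k) (Bq k i) :=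
  Module.Finite.of_surjective (Submodule.mkQ _) (Submodule.mkQ_surjective _)

theorem Bq_bound (k : Type) [Field k] {i n : ℕ} (h : i ≤ n) (b : Bq k i) :
    (X : Polynomial k) ^ n • b = 0 := by
  obtain ⟨p, rfl⟩ := Submodule.Quotient.mk_surjective _ b
  rw [← Submodule.Quotient.mk_smul, Submodule.Quotient.mk_eq_zero, smul_eq_mul]
  exact Ideal.mem_span_singleton.mpr ((pow_dvd_pow X h).mul_right p)

theorem Bq_smul_mk (k : Type) [Field k] {i j r : ℕ} (h : i ≤ j + r) :
    (X : Polynomial k) ^ r • (Submodule.Quotient.mk (X ^ j) : Bq k i) = 0 := by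
  rw [← Submodule.Quotient.mk_smul, Submodule.Quotient.mk_eq_zero, smul_eq_mul, ← pow_add]
  exact Ideal.mem_span_singleton.mpr (pow_dvd_pow X (by omega))

theorem span_smul_eq_zero {k : Type} [Field k] {B : Type} [AddCommGroup B]
    [Module (Polynomial k) B] (r : Polynomial k) {S : Set B} (h : ∀ v ∈ S, r • v = 0) :
    ∀ a ∈ Submodule.span (Polynomial k) S, r • a = 0 := by
  intro a ha
  induction ha using Submodule.span_induction with
  | mem v hv => exact h v hv
  | zero => simp
  | add x y _ _ hx hy => rw [smul_add, hx, hy, add_zero]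
  | smul c x _ hx => rw [smul_smul, mul_comm, ← smul_smul, hx, smul_zero]

/-- The pair `(0 ⊆ k[X]/(Xⁱ))` as an object of `Sₘ(k[T]/Tⁿ)`. -/
def pairZero (k : Type) [Field k] (m n i : ℕ) (h : i ≤ n) : SPair k m n where
  B := Bq k i
  bound := fun b => Bq_bound k h b
  A := ⊥
  subBound := fun a ha => by rw [(Submodule.mem_bot _).mp ha, smul_zero]

/-- The pair `(⟨Xʲ⟩ ⊆ k[X]/(Xⁱ))` as an object of `Sₘ(k[T]/Tⁿ)`. -/
def pairCyc (k : Type) [Field k] (m n i j : ℕ) (h : i ≤ n) (hj : i ≤ j + m) : SPair k m n where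
  B := Bq k i
  bound := fun b => Bq_bound k h b
  A := Submodule.span (Polynomial k) {(Submodule.Quotient.mk (X ^ j) : Bq k i)}
  subBound := fun a ha =>
    span_smul_eq_zero _
      (fun v hv => by rw [Set.mem_singleton_iff] at hv; rw [hv]; exact Bq_smul_mk k hj) a ha

/-- The pair `(R ⊆ R)` with `R = k[X]/(Xⁿ)`, as an object of `S(k[T]/Tⁿ) = Sₙ(k[T]/Tⁿ)`. -/
def pairRR (k : Type) [Field k] (n : ℕ) : SPair k n n where
  B := Bq k n
  bound := fun b => Bq_bound k le_rfl b
  A := ⊤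
  subBound := fun a _ => Bq_bound k le_rfl a

/-!
Let `C` be the cyclic submodule generated by `b`, where `pⁿ⁺¹` kills the whole module, `pⁿ • b ≠ 0`
and `(p)` is maximal, and let `N` be maximal among the submodules meeting `C` trivially. If `C ⊕ N`
were proper, there would be `x` outside it with `p • x = r • b + y` and `y ∈ N`. Multiplying by `pⁿ`
gives `pⁿ • r • b ∈ C ∩ N = 0`, so `r = p * s`; then `x' = x - s • b` satisfies `p • x' ∈ N`, and
`N + R x'` still meets `C` trivially, contradicting maximality. Hence `N` is a complement of `C`,
and when `b ∈ A` the modular law splits `A` along it. In an indecomposable pair `N = 0`, so the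
whole module is `C ≅ R / (pⁿ⁺¹)`.
-/

theorem exists_maximal_disjoint {α : Type*} [CompleteLattice α] [IsCompactlyGenerated α] (a : α) :
    ∃ b, Maximal (Disjoint a) b := by
  obtain ⟨b, -, hb⟩ := zorn_le_nonempty₀ {b : α | Disjoint a b}
    (fun c hc hchain _ _ ↦ ⟨sSup c, hchain.directedOn.disjoint_sSup_right.mpr fun b hb ↦ hc hb,
      fun _ ↦ le_sSup⟩) ⊥ disjoint_bot_right
  exact ⟨b, hb⟩

section PrincipalMaximalIdeal

variable {R M : Type*} [CommRing R] [AddCommGroup M] [Module R M] {p : R}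

theorem exists_notMem_smul_mem_of_pow_smul_mem {N : Submodule R M} {x : M} {n : ℕ} (hx : x ∉ N)
    (hpx : p ^ n • x ∈ N) : ∃ y ∉ N, p • y ∈ N := by
  induction n generalizing x with
  | zero => exact absurd (by simpa using hpx) hx
  | succ n ih =>
    by_cases h : p • x ∈ N
    · exact ⟨x, hx, h⟩
    · exact ih h (by rwa [smul_smul, ← pow_succ])

theorem dvd_of_smul_mem_of_notMem (hp : (Ideal.span {p}).IsMaximal) {N : Submodule R M} {x : M}
    (hx : x ∉ N) (hpx : p • x ∈ N) {r : R} (hr : r • x ∈ N) : p ∣ r := by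
  let I : Ideal R := N.comap (LinearMap.toSpanSingleton R M x)
  have hI : I ≠ ⊤ := fun h ↦ hx <| by simpa [I] using (Ideal.eq_top_iff_one I).mp h
  have hpI : Ideal.span {p} = I := hp.eq_of_le hI <|
    (Ideal.span_singleton_le_iff_mem I).mpr hpx
  exact Ideal.mem_span_singleton.mp (hpI ▸ hr)

theorem torsionOf_eq_span_pow (hp : (Ideal.span {p}).IsMaximal) {n : ℕ} {b : M}
    (hpb : p ^ (n + 1) • b = 0) (hb : p ^ n • b ≠ 0) :
    Ideal.torsionOf R M b = Ideal.span {p ^ (n + 1)} := by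
  refine le_antisymm (fun r hr ↦ ?_) ((Ideal.span_singleton_le_iff_mem _).mpr hpb)
  rw [Ideal.mem_torsionOf_iff] at hr
  rw [Ideal.mem_span_singleton]
  induction n generalizing b r with
  | zero =>
    rw [zero_add, pow_one] at hpb ⊢
    rw [pow_zero, one_smul] at hb
    exact dvd_of_smul_mem_of_notMem (N := ⊥) hp hb hpb hr
  | succ n ih =>
    have hdvd : p ∣ r := by
      refine dvd_of_smul_mem_of_notMem (N := ⊥) hp hb ?_ ?_
      · rwa [smul_smul, ← pow_succ']
      · rw [smul_comm, hr, smul_zero]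
        exact zero_mem _
    obtain ⟨s, rfl⟩ := hdvd
    rw [pow_succ']
    refine mul_dvd_mul_left p (ih (b := p • b) ?_ ?_ s ?_)
    · rwa [smul_smul, ← pow_succ]
    · rwa [smul_smul, ← pow_succ]
    · rwa [smul_smul, mul_comm]

theorem disjoint_sup_span_singleton (hp : (Ideal.span {p}).IsMaximal) {C N : Submodule R M}
    (hCN : Disjoint C N) {x : M} (hx : x ∉ C ⊔ N) (hpx : p • x ∈ N) :
    Disjoint C (N ⊔ Submodule.span R {x}) := by
  rw [Submodule.disjoint_def]
  intro c hc hcN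
  obtain ⟨y, hy, z, hz, rfl⟩ := Submodule.mem_sup.mp hcN
  obtain ⟨r, rfl⟩ := Submodule.mem_span_singleton.mp hz
  have hrx : r • x ∈ C ⊔ N := by
    have h := sub_mem (Submodule.mem_sup_left (T := N) hc) (Submodule.mem_sup_right (S := C) hy)
    rwa [add_sub_cancel_left] at h
  obtain ⟨s, rfl⟩ := dvd_of_smul_mem_of_notMem hp hx (Submodule.mem_sup_right hpx) hrx
  have hsN : (p * s) • x ∈ N := by
    rw [mul_comm, mul_smul]
    exact N.smul_mem s hpx
  exact Submodule.disjoint_def.mp hCN _ hc (add_mem hy hsN)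

theorem exists_smul_sub_smul_mem (hp : (Ideal.span {p}).IsMaximal) {n : ℕ}
    (hM : ∀ x : M, p ^ (n + 1) • x = 0) {b : M} (hb : p ^ n • b ≠ 0) {N : Submodule R M}
    (hN : Disjoint (Submodule.span R {b}) N) {x : M} (hx : p • x ∈ Submodule.span R {b} ⊔ N) :
    ∃ s : R, p • (x - s • b) ∈ N := by
  obtain ⟨c, hc, y, hy, hcy⟩ := Submodule.mem_sup.mp hx
  obtain ⟨r, rfl⟩ := Submodule.mem_span_singleton.mp hc
  have hzero : p ^ n • r • b + p ^ n • y = 0 := by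
    rw [← smul_add, hcy, smul_smul, ← pow_succ, hM]
  have hrb : r • p ^ n • b = 0 := by
    rw [smul_comm]
    refine Submodule.disjoint_def.mp hN _ (Submodule.smul_mem _ _ hc) ?_
    rw [eq_neg_of_add_eq_zero_left hzero]
    exact neg_mem (N.smul_mem _ hy)
  have hpb : p • p ^ n • b = 0 := by rw [smul_smul, ← pow_succ', hM]
  obtain ⟨s, rfl⟩ := dvd_of_smul_mem_of_notMem (N := ⊥) hp hb hpb hrb
  refine ⟨s, ?_⟩
  rwa [smul_sub, smul_smul, ← hcy, add_sub_cancel_left]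

theorem exists_isCompl_span_singleton (hp : (Ideal.span {p}).IsMaximal) {n : ℕ}
    (hM : ∀ x : M, p ^ (n + 1) • x = 0) {b : M} (hb : p ^ n • b ≠ 0) :
    ∃ N : Submodule R M, IsCompl (Submodule.span R {b}) N := by
  obtain ⟨N, hN⟩ := exists_maximal_disjoint (Submodule.span R {b})
  refine ⟨N, hN.prop, codisjoint_iff.mpr ?_⟩
  by_contra htop
  obtain ⟨x₀, hx₀⟩ : ∃ x, x ∉ Submodule.span R {b} ⊔ N := by
    simpa [Submodule.eq_top_iff'] using htop
  obtain ⟨x, hx, hpx⟩ := exists_notMem_smul_mem_of_pow_smul_mem (n := n + 1) hx₀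
    (hM x₀ ▸ zero_mem _)
  obtain ⟨s, hs⟩ := exists_smul_sub_smul_mem hp hM hb hN.prop hpx
  have hsb : s • b ∈ Submodule.span R {b} ⊔ N :=
    Submodule.mem_sup_left (Submodule.mem_span_singleton.mpr ⟨s, rfl⟩)
  have hx' : x - s • b ∉ Submodule.span R {b} ⊔ N := fun h ↦
    hx ((Submodule.sub_mem_iff_left _ hsb).mp h)
  have hle := hN.le_of_ge (disjoint_sup_span_singleton hp hN.prop hx' hs) le_sup_left
  exact hx' (Submodule.mem_sup_right (hle (Submodule.mem_sup_right
    (Submodule.mem_span_singleton_self _))))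

theorem exists_linearEquiv_quotient_span_pow (hp : (Ideal.span {p}).IsMaximal) {n : ℕ} {b : M}
    (hpb : p ^ (n + 1) • b = 0) (hb : p ^ n • b ≠ 0) (htop : Submodule.span R {b} = ⊤) :
    Nonempty (M ≃ₗ[R] R ⧸ Ideal.span {p ^ (n + 1)}) :=
  ⟨(LinearEquiv.ofTop _ htop).symm ≪≫ₗ
    (Ideal.quotTorsionOfEquivSpanSingleton R M b).symm ≪≫ₗ
    Submodule.quotEquivOfEq _ _ (torsionOf_eq_span_pow hp hpb hb)⟩

theorem split_off_RR_general (hp : (Ideal.span {p}).IsMaximal) {n : ℕ}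
    (hM : ∀ x : M, p ^ (n + 1) • x = 0) {A : Submodule R M} (hA : ∃ a ∈ A, p ^ n • a ≠ 0) :
    (∃ b ∈ A, p ^ n • b ≠ 0 ∧ Submodule.span R {b} ≤ A ∧
      ∃ N : Submodule R M, Submodule.span R {b} ⊓ N = ⊥ ∧ Submodule.span R {b} ⊔ N = ⊤ ∧
        A = Submodule.span R {b} ⊔ (A ⊓ N)) ∧
    ((∀ N₁ N₂ : Submodule R M, N₁ ⊓ N₂ = ⊥ → N₁ ⊔ N₂ = ⊤ → A = A ⊓ N₁ ⊔ A ⊓ N₂ →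
        N₁ = ⊥ ∨ N₂ = ⊥) →
      ∃ e : M ≃ₗ[R] R ⧸ Ideal.span {p ^ (n + 1)}, A.map e.toLinearMap = ⊤) := by
  obtain ⟨b, hbA, hb⟩ := hA
  have hle : Submodule.span R {b} ≤ A := (Submodule.span_singleton_le_iff_mem b A).mpr hbA
  obtain ⟨N, hN⟩ := exists_isCompl_span_singleton hp hM hb
  have hsplit : A = Submodule.span R {b} ⊔ (A ⊓ N) := by
    rw [inf_comm, ← sup_inf_assoc_of_le N hle, hN.sup_eq_top, top_inf_eq]
  refine ⟨⟨b, hbA, hb, hle, N, hN.inf_eq_bot, hN.sup_eq_top, hsplit⟩, fun hindec ↦ ?_⟩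
  have hspan : Submodule.span R {b} ≠ ⊥ := fun h ↦ hb <| by
    rw [Submodule.span_singleton_eq_bot.mp h, smul_zero]
  have hNbot : N = ⊥ := (hindec _ N hN.inf_eq_bot hN.sup_eq_top
    (by rwa [inf_eq_right.mpr hle])).resolve_left hspan
  have htop : Submodule.span R {b} = ⊤ := by simpa only [hNbot, sup_bot_eq] using hN.sup_eq_top
  obtain ⟨e⟩ := exists_linearEquiv_quotient_span_pow hp (hM b) hb htop
  have hAtop : A = ⊤ := top_le_iff.mp (htop.ge.trans hle)
  exact ⟨e, by rw [hAtop, Submodule.map_top, e.range]⟩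

end PrincipalMaximalIdeal

/-- **Splitting off `(R ⊆ R)`.**  Let `(A ⊆ B)` be a pair in `S(k[T]/Tⁿ)` with
`Xⁿ⁻¹ • A ≠ 0`.  Then `(A ⊆ B)` has a direct summand isomorphic to `(R ⊆ R)`: there is
`b ∈ A` with `Xⁿ⁻¹ • b ≠ 0` such that the cyclic submodule `C = R·b` is contained in `A`
and splits off, i.e. there is a complement `B'` with `B = C ⊕ B'` and `A = C ⊕ (A ∩ B')`.
In particular every indecomposable pair `(A ⊆ B)` with `Xⁿ⁻¹ • A ≠ 0` is isomorphic to
`(R ⊆ R)`; equivalently, `(R ⊆ R)` is the only indecomposable object of `S(k[T]/Tⁿ)` not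
lying in `S_{n-1}(k[T]/Tⁿ)`. -/
theorem split_off_RR (k : Type) [Field k] (n : ℕ) (hn : 0 < n) :
    (∀ M : SPair k n n, (∃ a ∈ M.A, (X : Polynomial k) ^ (n - 1) • a ≠ 0) →
      ∃ b ∈ M.A, (X : Polynomial k) ^ (n - 1) • b ≠ 0 ∧
        Submodule.span (Polynomial k) {b} ≤ M.A ∧
        ∃ B' : Submodule (Polynomial k) M.B,
          Submodule.span (Polynomial k) {b} ⊓ B' = ⊥ ∧
          Submodule.span (Polynomial k) {b} ⊔ B' = ⊤ ∧
          M.A = Submodule.span (Polynomial k) {b} ⊔ (M.A ⊓ B')) ∧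
    (∀ M : SPair k n n, (∃ a ∈ M.A, (X : Polynomial k) ^ (n - 1) • a ≠ 0) →
      M.Indec → M.Iso (pairRR k n)) := by
  obtain ⟨n, rfl⟩ := Nat.exists_eq_add_one.mpr hn
  have hX : (Ideal.span {(X : Polynomial k)}).IsMaximal :=
    PrincipalIdealRing.isMaximal_of_irreducible irreducible_X
  exact ⟨fun M hA ↦ (split_off_RR_general hX M.bound hA).1,
    fun M hA hM ↦ (split_off_RR_general hX M.bound hA).2 hM.2⟩

end
end

section
/- Let k be a field, m ≤ n positive integers, and R = k[X]/(X^n). The objects (0, R) and (X^{n−m}·R, R) of S_m(k[T]/T^n) are relatively injective, and conversely every indecomposable relatively injective object of S_m(k[T]/T^n) is isomorphic to (0, R) or to (X^{n−m}·R, R). -/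
open Polynomial

noncomputable section

/-- Relative injectivity in the exact category `Sₘ(k[T]/Tⁿ)`: every inflation out of the
object (an `R`-linear injection `f : B → B'` with `f(A) = A' ∩ im f`) admits a retraction
`π` with `π ∘ f = id` and `π(A') ⊆ A`. -/
def SPair.RelInjective {k : Type} [Field k] {m n : ℕ} (M : SPair k m n) : Prop :=
  ∀ (N : SPair k m n) (f : M.B →ₗ[Polynomial k] N.B),
    Function.Injective f → M.A.map f = N.A ⊓ LinearMap.range f →
    ∃ π : N.B →ₗ[Polynomial k] M.B, π ∘ₗ f = LinearMap.id ∧ N.A.map π ≤ M.A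

/-!
For `a ≠ 0` in a principal ideal domain `R`, the ring `R/(a)` is self-injective. With
`R/(a) = k[X]/(Xⁿ)`, this extends maps into the two given objects along inflations; a map into
`(0, k[X]/(Xⁿ))` is first factored through `B'/A'`.

Conversely, let `(A, B)` be indecomposable and relatively injective, and write `B[Xᵐ]` for the
`Xᵐ`-torsion of `B`. A retraction of the inflation `b ↦ (b, b + A)` from `(A, B)` to
`(B[Xᵐ] ⊕ 0, B ⊕ B/A)` restricts to an endomorphism `g` of `B` that fixes `A` pointwise and maps
`B[Xᵐ]` into `A`. By Fitting's lemma, `A = 0` or `g` is injective, and in the second case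
`A = B[Xᵐ]`. Both are compatible with every decomposition of `B`, so `B` itself is indecomposable.
A cyclic submodule of `B` with the same annihilator as `B` splits off, by self-injectivity, so
`B ≅ k[X]/(Xⁱ)` with `i ≤ n`. Finally, `Xⁿ⁻ⁱ : k[X]/(Xⁱ) → k[X]/(Xⁿ)` splits, which makes `Xⁿ⁻ⁱ`
invertible modulo `Xⁱ` and hence `i = n`.
-/

theorem isCompl_range_ker_of_leftInverse {R M N : Type*} [Ring R] [AddCommGroup M] [Module R M]
    [AddCommGroup N] [Module R N] {ι : N →ₗ[R] M} {π : M →ₗ[R] N}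
    (h : Function.LeftInverse π ι) : IsCompl (LinearMap.range ι) (LinearMap.ker π) := by
  have hidem : IsIdempotentElem (ι ∘ₗ π) := LinearMap.ext fun x ↦ congrArg ι (h (π x))
  rw [← LinearMap.range_comp_of_range_eq_top ι (LinearMap.range_eq_top.2 h.surjective),
    ← LinearMap.ker_comp_of_ker_eq_bot π (LinearMap.ker_eq_bot.2 h.injective)]
  exact LinearMap.IsIdempotentElem.isCompl hidem

section PrincipalIdealDomain

variable {R : Type*} [CommRing R] [IsDomain R] [IsPrincipalIdealRing R]

theorem baer_quotient_span_singleton {a : R} (ha : a ≠ 0) :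
    Module.Baer (R ⧸ Ideal.span {a}) (R ⧸ Ideal.span {a}) := by
  -- With `a = d * e`, a map on the ideal `(d)` sending `d` to `y` forces `a ∣ e * y`, so `d ∣ y`.
  intro I g
  obtain ⟨d, hd⟩ := IsPrincipalIdealRing.principal (I.comap (Ideal.Quotient.mk (Ideal.span {a})))
  have mk_mem_iff (x : R) : Ideal.Quotient.mk (Ideal.span {a}) x ∈ I ↔ d ∣ x := by
    rw [← Ideal.mem_comap, hd, Ideal.submodule_span_eq, Ideal.mem_span_singleton]
  obtain ⟨e, rfl⟩ : d ∣ a := (mk_mem_iff a).1 <| by simp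
  let u : I := ⟨Ideal.Quotient.mk _ d, (mk_mem_iff d).2 dvd_rfl⟩
  obtain ⟨y, hy⟩ := Ideal.Quotient.mk_surjective (g u)
  obtain ⟨z, rfl⟩ : d ∣ y := by
    have smul_u_eq_zero : Ideal.Quotient.mk (Ideal.span {d * e}) e • u = 0 :=
      Subtype.ext <| by simp [u, ← map_mul, mul_comm e d]
    have mk_mul_eq_zero := congrArg g smul_u_eq_zero
    rw [map_smul, map_zero, ← hy, smul_eq_mul, ← map_mul] at mk_mul_eq_zero
    rw [Ideal.Quotient.eq_zero_iff_dvd, mul_comm d e] at mk_mul_eq_zero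
    exact (mul_dvd_mul_iff_left (right_ne_zero_of_mul ha)).1 mk_mul_eq_zero
  refine ⟨LinearMap.toSpanSingleton _ _ (Ideal.Quotient.mk _ z), fun x hx ↦ ?_⟩
  obtain ⟨x, rfl⟩ := Ideal.Quotient.mk_surjective x
  obtain ⟨c, rfl⟩ := (mk_mem_iff x).1 hx
  have eq_smul_u : (⟨_, hx⟩ : I) = Ideal.Quotient.mk (Ideal.span {d * e}) c • u :=
    Subtype.ext <| by simp [u, mul_comm]
  rw [eq_smul_u, map_smul, ← hy, LinearMap.toSpanSingleton_apply, smul_eq_mul, smul_eq_mul,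
    ← map_mul, ← map_mul, mul_comm d c, mul_assoc]

variable {M N : Type*} [AddCommGroup M] [Module R M] [AddCommGroup N] [Module R N] {a : R}

theorem exists_extend_quotient_span_singleton (ha : a ≠ 0) (hN : Module.IsTorsionBy R N a)
    {f : M →ₗ[R] N} (hf : Function.Injective f) (g : M →ₗ[R] R ⧸ Ideal.span {a}) :
    ∃ h : N →ₗ[R] R ⧸ Ideal.span {a}, h ∘ₗ f = g := by
  have hM : Module.IsTorsionBy R M a := fun x ↦ hf <| by rw [map_smul, hN, map_zero]
  let := hM.module
  let := hN.module
  have : IsScalarTower R (R ⧸ Ideal.span {a}) M :=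
    ((Module.isTorsionBySet_span_singleton_iff a).2 hM).isScalarTower
  have : IsScalarTower R (R ⧸ Ideal.span {a}) N :=
    ((Module.isTorsionBySet_span_singleton_iff a).2 hN).isScalarTower
  have mk_surjective : Function.Surjective (algebraMap R (R ⧸ Ideal.span {a})) :=
    Ideal.Quotient.mk_surjective
  obtain ⟨h, hh⟩ := (baer_quotient_span_singleton ha).extension_property
    (f.extendScalarsOfSurjective mk_surjective) hf (g.extendScalarsOfSurjective mk_surjective)
  exact ⟨h.restrictScalars R, LinearMap.ext fun x ↦ LinearMap.congr_fun hh x⟩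

theorem isArtinian_of_isTorsionBy [Module.Finite R M] (ha : a ≠ 0)
    (hM : Module.IsTorsionBy R M a) : IsArtinian R M := by
  let := hM.module
  have : IsScalarTower R (R ⧸ Ideal.span {a}) M :=
    ((Module.isTorsionBySet_span_singleton_iff a).2 hM).isScalarTower
  have : IsArtinian R (R ⧸ Ideal.span {a}) :=
    (isFiniteLength_iff_isNoetherian_isArtinian.1
      (isFiniteLength_quotient_span_singleton R (mem_nonZeroDivisors_of_ne_zero ha))).2
  have : IsArtinianRing (R ⧸ Ideal.span {a}) := isArtinian_of_tower R inferInstance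
  have : Module.Finite (R ⧸ Ideal.span {a}) M := Module.Finite.of_restrictScalars_finite R _ M
  exact isArtinian_of_surjective_algebraMap (R := R ⧸ Ideal.span {a}) Ideal.Quotient.mk_surjective

variable (M) in
theorem exists_injective_quotient_annihilator [Module.Finite R M] :
    ∃ ι : (R ⧸ Module.annihilator R M) →ₗ[R] M, Function.Injective ι := by
  obtain ⟨x, hx⟩ := Module.exists_ker_toSpanSingleton_eq_annihilator R M
  exact ⟨_, LinearMap.ker_eq_bot.1 (Submodule.ker_liftQ_eq_bot' _ _ hx.symm)⟩

theorem exists_equiv_quotient_span_singleton_of_isCompl [Module.Finite R M] (ha : a ≠ 0)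
    (hM : Module.IsTorsionBy R M a)
    (hcompl : ∀ B₁ B₂ : Submodule R M, IsCompl B₁ B₂ → B₁ = ⊥ ∨ B₂ = ⊥) :
    ∃ d, d ∣ a ∧ Nonempty (M ≃ₗ[R] R ⧸ Ideal.span {d}) := by
  obtain ⟨d, hd⟩ := IsPrincipalIdealRing.principal (Module.annihilator R M)
  rw [Ideal.submodule_span_eq] at hd
  have hda : d ∣ a := by
    rw [← Ideal.mem_span_singleton, ← hd]
    exact Module.mem_annihilator.2 fun x ↦ hM (x := x)
  have hMd : Module.IsTorsionBy R M d := fun x ↦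
    Module.mem_annihilator.1 (hd ▸ Ideal.mem_span_singleton_self d) x
  obtain ⟨ι, hι⟩ := hd ▸ exists_injective_quotient_annihilator (R := R) M
  obtain ⟨π, hπ⟩ :=
    exists_extend_quotient_span_singleton (ne_zero_of_dvd_ne_zero ha hda) hMd hι LinearMap.id
  have hπι : Function.LeftInverse π ι := LinearMap.congr_fun hπ
  have hker : LinearMap.ker π = ⊥ := by
    refine (hcompl _ _ (isCompl_range_ker_of_leftInverse hπι)).elim (fun hrange ↦ ?_) id
    rw [LinearMap.range_eq_bot] at hrange
    have : Subsingleton (R ⧸ Ideal.span {d}) :=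
      subsingleton_of_forall_eq 0 fun y ↦ hι <| by rw [hrange, LinearMap.zero_apply, map_zero]
    have : Subsingleton M := by
      rwa [← Module.annihilator_eq_top_iff (R := R), hd, ← Ideal.Quotient.subsingleton_iff]
    exact Subsingleton.elim _ _
  exact ⟨d, hda, ⟨LinearEquiv.ofBijective π ⟨LinearMap.ker_eq_bot.1 hker, hπι.surjective⟩⟩⟩

end PrincipalIdealDomain

open scoped Pointwise in
theorem isCoprime_of_comp_mulQuot_eq_id {R : Type*} [CommRing R] {a b : R}
    {π : (R ⧸ a • Ideal.span {b}) →ₗ[R] R ⧸ Ideal.span {b}}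
    (hπ : π ∘ₗ Ideal.mulQuot a (Ideal.span {b}) = LinearMap.id) : IsCoprime a b := by
  obtain ⟨y, hy⟩ := Ideal.Quotient.mk_surjective (π 1)
  have mulQuot_one : Ideal.mulQuot a (Ideal.span {b}) 1 = a • 1 := rfl
  have mk_mul_eq_one : Ideal.Quotient.mk (Ideal.span {b}) (a * y) = 1 := by
    calc Ideal.Quotient.mk (Ideal.span {b}) (a * y) = a • π 1 := by rw [← hy]; rfl
      _ = π (Ideal.mulQuot a (Ideal.span {b}) 1) := by rw [mulQuot_one, map_smul]
      _ = 1 := LinearMap.congr_fun hπ 1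
  rw [Ideal.Quotient.mk_eq_one_iff_sub_mem, Ideal.mem_span_singleton] at mk_mul_eq_one
  obtain ⟨z, hz⟩ := mk_mul_eq_one
  exact ⟨y, -z, by linear_combination hz⟩

section TorsionBy

variable {R M N : Type*} [CommRing R] [AddCommGroup M] [Module R M] [AddCommGroup N] [Module R N]

theorem torsionBy_eq_inf_sup_inf (a : R) {B₁ B₂ : Submodule R M} (h : IsCompl B₁ B₂) :
    Submodule.torsionBy R M a =
      Submodule.torsionBy R M a ⊓ B₁ ⊔ Submodule.torsionBy R M a ⊓ B₂ := by
  refine le_antisymm (fun x hx ↦ ?_) (sup_le inf_le_left inf_le_left)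
  obtain ⟨y, hy, z, hz, rfl⟩ := Submodule.mem_sup.1 (h.sup_eq_top ▸ Submodule.mem_top (x := x))
  rw [Submodule.mem_torsionBy_iff, smul_add] at hx
  have ay_eq_zero : a • y = 0 := by
    refine Submodule.disjoint_def.1 h.disjoint _ (B₁.smul_mem a hy) ?_
    rw [eq_neg_of_add_eq_zero_left hx]
    exact B₂.neg_mem (B₂.smul_mem a hz)
  have az_eq_zero : a • z = 0 := by rwa [ay_eq_zero, zero_add] at hx
  exact Submodule.add_mem_sup ⟨ay_eq_zero, hy⟩ ⟨az_eq_zero, hz⟩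

theorem map_torsionBy_le (a : R) (f : M →ₗ[R] N) :
    (Submodule.torsionBy R M a).map f ≤ Submodule.torsionBy R N a := by
  rintro _ ⟨x, hx, rfl⟩
  rw [Submodule.mem_torsionBy_iff, ← map_smul, (Submodule.mem_torsionBy_iff a x).1 hx, map_zero]

theorem map_equiv_torsionBy (a : R) (e : M ≃ₗ[R] N) :
    (Submodule.torsionBy R M a).map e.toLinearMap = Submodule.torsionBy R N a := by
  refine le_antisymm (map_torsionBy_le a _) fun y hy ↦ ?_
  exact ⟨e.symm y, map_torsionBy_le a e.symm.toLinearMap ⟨y, hy, rfl⟩, e.apply_symm_apply y⟩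

end TorsionBy

namespace SPair

variable {k : Type} [Field k] {m n : ℕ} {M : SPair k m n}

theorem isTorsionBy (M : SPair k m n) : Module.IsTorsionBy k[X] M.B (X ^ n) :=
  fun b ↦ M.bound b

theorem le_torsionBy (M : SPair k m n) : M.A ≤ Submodule.torsionBy k[X] M.B (X ^ m) :=
  M.subBound

theorem relInjective_pairZero : (pairZero k m n n le_rfl).RelInjective := by
  intro N f hf hfA
  have hfA_bot : N.A ⊓ LinearMap.range f = ⊥ := hfA ▸ Submodule.map_bot f
  have mkQ_comp_injective : Function.Injective (N.A.mkQ ∘ₗ f) := by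
    rw [← LinearMap.ker_eq_bot, LinearMap.ker_comp, Submodule.ker_mkQ]
    refine (Submodule.eq_bot_iff _).2 fun x hx ↦ ?_
    have hfx : f x ∈ N.A ⊓ LinearMap.range f := ⟨hx, x, rfl⟩
    rw [hfA_bot, Submodule.mem_bot] at hfx
    exact hf (hfx.trans (map_zero f).symm)
  obtain ⟨h, hh⟩ := exists_extend_quotient_span_singleton (pow_ne_zero n X_ne_zero)
    (N.isTorsionBy.quotient N.A) mkQ_comp_injective LinearMap.id
  refine ⟨h ∘ₗ N.A.mkQ, hh, ?_⟩
  rintro _ ⟨a, ha, rfl⟩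
  have mkQ_eq_zero : N.A.mkQ a = 0 := (Submodule.Quotient.mk_eq_zero _).2 ha
  exact (congrArg h mkQ_eq_zero).trans (map_zero h)

theorem pairCyc_sub_A_eq_torsionBy (hmn : m ≤ n) :
    (pairCyc k m n n (n - m) le_rfl le_tsub_add).A = Submodule.torsionBy k[X] (Bq k n) (X ^ m) := by
  have torsionBy_eq := Ideal.Quotient.torsionBy_eq_span_singleton (X ^ m : k[X]) (X ^ (n - m))
    (mem_nonZeroDivisors_of_ne_zero (pow_ne_zero m X_ne_zero))
  rw [← pow_add, Nat.add_sub_cancel' hmn] at torsionBy_eq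
  exact torsionBy_eq.symm

theorem relInjective_pairCyc (hmn : m ≤ n) :
    (pairCyc k m n n (n - m) le_rfl le_tsub_add).RelInjective := by
  intro N f hf _
  obtain ⟨π, hπ⟩ := exists_extend_quotient_span_singleton (pow_ne_zero n X_ne_zero)
    N.isTorsionBy hf LinearMap.id
  refine ⟨π, hπ, ?_⟩
  rw [pairCyc_sub_A_eq_torsionBy hmn]
  exact (Submodule.map_mono N.le_torsionBy).trans (map_torsionBy_le _ π)

section Retraction

variable {B : Type} [AddCommGroup B] [Module k[X] B] [Module.Finite k[X] B]

theorem RelInjective.exists_retraction (hM : M.RelInjective)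
    (hB : Module.IsTorsionBy k[X] B (X ^ n)) {A : Submodule k[X] B}
    (hA : A ≤ Submodule.torsionBy k[X] B (X ^ m)) {f : M.B →ₗ[k[X]] B} (hf : Function.Injective f)
    (hfA : M.A.map f = A ⊓ LinearMap.range f) :
    ∃ π : B →ₗ[k[X]] M.B, π ∘ₗ f = LinearMap.id ∧ A.map π ≤ M.A :=
  hM ⟨B, fun b ↦ hB (x := b), A, hA⟩ f hf hfA

theorem RelInjective.exists_comp_eq_id (hM : M.RelInjective)
    (hB : Module.IsTorsionBy k[X] B (X ^ n)) {f : M.B →ₗ[k[X]] B} (hf : Function.Injective f) :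
    ∃ π : B →ₗ[k[X]] M.B, π ∘ₗ f = LinearMap.id :=
  (hM.exists_retraction hB ((Submodule.map_mono M.le_torsionBy).trans (map_torsionBy_le _ f)) hf
    (inf_eq_left.2 LinearMap.map_le_range).symm).imp fun _ ↦ And.left

end Retraction

theorem map_id_prod_mkQ (M : SPair k m n) :
    M.A.map (LinearMap.id.prod M.A.mkQ) =
      (Submodule.torsionBy k[X] M.B (X ^ m)).prod ⊥ ⊓
        LinearMap.range (LinearMap.id.prod M.A.mkQ) := by
  ext x
  constructor
  · rintro ⟨a, ha, rfl⟩
    exact ⟨⟨M.le_torsionBy ha, (Submodule.Quotient.mk_eq_zero _).2 ha⟩, a, rfl⟩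
  · rintro ⟨⟨-, hb⟩, b, rfl⟩
    exact ⟨b, (Submodule.Quotient.mk_eq_zero _).1 hb, rfl⟩

theorem RelInjective.exists_end_eq_self_and_map_torsionBy_le (hM : M.RelInjective) :
    ∃ g : Module.End k[X] M.B,
      (∀ a ∈ M.A, g a = a) ∧ (Submodule.torsionBy k[X] M.B (X ^ m)).map g ≤ M.A := by
  have prod_isTorsionBy : Module.IsTorsionBy k[X] (M.B × (M.B ⧸ M.A)) (X ^ n) := fun x ↦
    Prod.ext (M.bound x.1) (M.isTorsionBy.quotient M.A (x := x.2))
  have prod_le_torsionBy : (Submodule.torsionBy k[X] M.B (X ^ m)).prod ⊥ ≤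
      Submodule.torsionBy k[X] (M.B × (M.B ⧸ M.A)) (X ^ m) := by
    rintro ⟨b, c⟩ ⟨hb, rfl : c = 0⟩
    exact Prod.ext hb (smul_zero _)
  obtain ⟨π, hπ, hπA⟩ := hM.exists_retraction prod_isTorsionBy prod_le_torsionBy
    (fun _ _ h ↦ congrArg Prod.fst h) M.map_id_prod_mkQ
  refine ⟨π ∘ₗ LinearMap.inl k[X] M.B (M.B ⧸ M.A), fun a ha ↦ ?_, ?_⟩
  · have inl_eq : LinearMap.inl k[X] M.B (M.B ⧸ M.A) a = LinearMap.id.prod M.A.mkQ a :=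
      Prod.ext rfl ((Submodule.Quotient.mk_eq_zero _).2 ha).symm
    rw [LinearMap.comp_apply, inl_eq]
    exact LinearMap.congr_fun hπ a
  · rw [Submodule.map_comp, Submodule.map_inl]
    exact hπA

theorem Indec.eq_bot_or_injective (hM : M.Indec) {g : Module.End k[X] M.B}
    (hg : ∀ a ∈ M.A, g a = a) : M.A = ⊥ ∨ Function.Injective g := by
  have : IsArtinian k[X] M.B := isArtinian_of_isTorsionBy (pow_ne_zero n X_ne_zero) M.isTorsionBy
  obtain ⟨r, hcompl, hr⟩ :=
    (g.eventually_isCompl_ker_pow_range_pow.and (Filter.eventually_ne_atTop 0)).exists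
  have A_le_range : M.A ≤ LinearMap.range (g ^ r) := fun a ha ↦
    ⟨a, by rw [Module.End.pow_apply]; exact Function.iterate_fixed (hg a ha) r⟩
  have A_eq : M.A = M.A ⊓ LinearMap.ker (g ^ r) ⊔ M.A ⊓ LinearMap.range (g ^ r) := by
    rw [inf_eq_left.2 A_le_range]
    exact (sup_eq_right.2 inf_le_left).symm
  rcases hM.2 _ _ hcompl.inf_eq_bot hcompl.sup_eq_top A_eq with hker | hrange
  · right
    rw [← Nat.sub_one_add_one hr, pow_succ, LinearMap.ker_eq_bot] at hker
    exact Function.Injective.of_comp hker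
  · exact Or.inl (le_bot_iff.1 (hrange ▸ A_le_range))

theorem RelInjective.eq_bot_or_eq_torsionBy (hM : M.RelInjective) (hind : M.Indec) :
    M.A = ⊥ ∨ M.A = Submodule.torsionBy k[X] M.B (X ^ m) := by
  obtain ⟨g, hgA, hg⟩ := hM.exists_end_eq_self_and_map_torsionBy_le
  refine (hind.eq_bot_or_injective hgA).imp_right fun g_injective ↦ ?_
  refine le_antisymm M.le_torsionBy fun b hb ↦ ?_
  have gb_mem : g b ∈ M.A := hg (Submodule.mem_map_of_mem hb)
  rwa [g_injective (hgA _ gb_mem)] at gb_mem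

theorem RelInjective.eq_bot_or_eq_bot_of_isCompl (hM : M.RelInjective) (hind : M.Indec)
    (B₁ B₂ : Submodule k[X] M.B) (h : IsCompl B₁ B₂) : B₁ = ⊥ ∨ B₂ = ⊥ := by
  refine hind.2 B₁ B₂ h.inf_eq_bot h.sup_eq_top ?_
  rcases hM.eq_bot_or_eq_torsionBy hind with hA | hA
  · rw [hA, bot_inf_eq, bot_inf_eq, bot_sup_eq]
  · rw [hA]
    exact torsionBy_eq_inf_sup_inf _ h

theorem RelInjective.exists_equiv_Bq (hM : M.RelInjective) (hind : M.Indec) :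
    ∃ i ≤ n, Nonempty (M.B ≃ₗ[k[X]] Bq k i) := by
  obtain ⟨d, hd, ⟨e⟩⟩ := exists_equiv_quotient_span_singleton_of_isCompl (pow_ne_zero n X_ne_zero)
    M.isTorsionBy (hM.eq_bot_or_eq_bot_of_isCompl hind)
  obtain ⟨i, hi, hdi⟩ := (dvd_prime_pow prime_X n).1 hd
  exact ⟨i, hi, ⟨e ≪≫ₗ Submodule.quotEquivOfEq _ _ (Ideal.span_singleton_eq_span_singleton.2 hdi)⟩⟩

open scoped Pointwise in
theorem RelInjective.eq_of_equiv_Bq (hM : M.RelInjective) [Nontrivial M.B] {i : ℕ} (hi : i ≤ n)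
    (e : M.B ≃ₗ[k[X]] Bq k i) : i = n := by
  have smul_span_eq : (X ^ (n - i) : k[X]) • Ideal.span {(X : k[X]) ^ i} = Ideal.span {X ^ n} := by
    rw [← Ideal.submodule_span_eq, Submodule.smul_span, Set.smul_set_singleton, smul_eq_mul,
      ← pow_add, Nat.sub_add_cancel hi]
  obtain ⟨π, hπ⟩ := hM.exists_comp_eq_id (f := Ideal.mulQuot (X ^ (n - i)) _ ∘ₗ e.toLinearMap)
    (smul_span_eq ▸ Bq_bound k le_rfl)
    ((Ideal.mulQuot_injective _ (mem_nonZeroDivisors_of_ne_zero (pow_ne_zero _ X_ne_zero))).comp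
      e.injective)
  have hcoprime : IsCoprime (X ^ (n - i) : k[X]) (X ^ i) := by
    refine isCoprime_of_comp_mulQuot_eq_id (π := e.toLinearMap ∘ₗ π) (LinearMap.ext fun x ↦ ?_)
    simpa using congrArg e (LinearMap.congr_fun hπ (e.symm x))
  have hi_ne_zero : i ≠ 0 := by
    rintro rfl
    obtain ⟨b, hb⟩ := exists_ne (0 : M.B)
    exact hb (e.map_eq_zero_iff.1 (by simpa using Bq_bound k le_rfl (e b)))
  by_contra hin
  exact not_isUnit_X (isCoprime_self.1 ((IsCoprime.pow_iff (by omega) (by omega)).1 hcoprime))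

end SPair

/-- **Relatively injective objects of `Sₘ(k[T]/Tⁿ)`.**  With `R = k[X]/(Xⁿ)`, the objects
`(0 ⊆ R)` and `(Xⁿ⁻ᵐ·R ⊆ R)` are relatively injective, and conversely every indecomposable
relatively injective object of `Sₘ(k[T]/Tⁿ)` is isomorphic to one of them. -/
theorem relatively_injective_objects (k : Type) [Field k] (m n : ℕ)
    (hm : 0 < m) (hmn : m ≤ n) :
    (pairZero k m n n le_rfl).RelInjective ∧
    (pairCyc k m n n (n - m) le_rfl (by omega)).RelInjective ∧
    (∀ M : SPair k m n, M.Indec → M.RelInjective →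
      M.Iso (pairZero k m n n le_rfl) ∨ M.Iso (pairCyc k m n n (n - m) le_rfl (by omega))) := by
  refine ⟨SPair.relInjective_pairZero, SPair.relInjective_pairCyc hmn, fun M hind hM ↦ ?_⟩
  have : Nontrivial M.B := (nontrivial_iff_exists_ne 0).2 hind.1
  obtain ⟨i, hi, ⟨e⟩⟩ := hM.exists_equiv_Bq hind
  obtain rfl := hM.eq_of_equiv_Bq hi e
  refine (hM.eq_bot_or_eq_torsionBy hind).imp (fun hA ↦ ⟨e, ?_⟩) fun hA ↦ ⟨e, ?_⟩
  · rw [hA]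
    exact Submodule.map_bot _
  · rw [hA, SPair.pairCyc_sub_A_eq_torsionBy hmn]
    exact map_equiv_torsionBy _ e

end
end

section
/- Let k be a field, m ≤ n positive integers, R = k[X]/(X^n) and R_m = k[X]/(X^m), regarded as an R-module. The objects (0, R) and (R_m, R_m) of S_m(k[T]/T^n) are relatively projective, and conversely every indecomposable relatively projective object of S_m(k[T]/T^n) is isomorphic to (0, R) or to (R_m, R_m). -/
/-!
If `M = (A, B)` is relatively projective, the identity of `M` lifts along the deflation
`(A × 0, A × B) → (A, B)`, `(a, b) ↦ a + b`. The first component of the lift is a retraction of `B`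
onto `A`, so `(A, B) = (0, C) ⊕ (A, A)` for a complement `C` of `A`, and an indecomposable `M` has
`A = 0` or `A = B`.

In either case `B` is an indecomposable module, and every surjection onto `B` from a free module of
finite rank over the local ring `k[X]/(Xⁱ)` splits, where `i = n` if `A = 0` and `i = m` if `A = B`.
So `B` is projective, hence free, over that ring, and being indecomposable it has rank one.
-/

open Polynomial

noncomputable section

/-- Relative projectivity in the exact category `Sₘ(k[T]/Tⁿ)`: every morphism into the
target of a deflation (an `R`-linear surjection `g : B' → B''` with `g(A') = A''`) lifts
along the deflation. -/
def SPair.RelProjective {k : Type} [Field k] {m n : ℕ} (M : SPair k m n) : Prop :=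
  ∀ (N N' : SPair k m n) (g : N.B →ₗ[Polynomial k] N'.B),
    Function.Surjective g → N.A.map g = N'.A →
    ∀ h : M.B →ₗ[Polynomial k] N'.B, M.A.map h ≤ N'.A →
    ∃ h' : M.B →ₗ[Polynomial k] N.B, g ∘ₗ h' = h ∧ M.A.map h' ≤ N.A

/-- The pair `(Rₘ ⊆ Rₘ)` with `Rₘ = k[X]/(Xᵐ)`, as an object of `Sₘ(k[T]/Tⁿ)`. -/
def pairRm (k : Type) [Field k] (m n : ℕ) (h : m ≤ n) : SPair k m n where
  B := Bq k m
  bound := fun b => Bq_bound k h b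
  A := ⊤
  subBound := fun a _ => Bq_bound k le_rfl a

section Ring

variable {R V W : Type*} [Ring R] [AddCommGroup V] [Module R V] [AddCommGroup W] [Module R W]

theorem exists_comp_eq_and_range_le_span (I : Ideal R) (g : V →ₗ[R] W) (h : R ⧸ I →ₗ[R] W)
    (v : V) (hv : I ≤ Ideal.torsionOf R V v) (hgv : g v = h (Submodule.Quotient.mk 1)) :
    ∃ h' : R ⧸ I →ₗ[R] V, g ∘ₗ h' = h ∧ h'.range ≤ R ∙ v := by
  have hker : I ≤ (LinearMap.toSpanSingleton R V v).ker := hv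
  refine ⟨I.liftQ (LinearMap.toSpanSingleton R V v) hker, ?_, ?_⟩
  · ext
    exact (congrArg g (one_smul R v)).trans hgv
  · rw [Submodule.range_liftQ, LinearMap.range_toSpanSingleton]

/-- An indecomposable module: one that is nonzero and not the internal direct sum of two nonzero
submodules. Indecomposable pairs `(0, B)` and `(B, B)` are those with `B` indecomposable. -/
structure IsIndecomposable (R V : Type*) [Ring R] [AddCommGroup V] [Module R V] : Prop where
  nontrivial : Nontrivial V
  eq_bot_or_eq_bot : ∀ {p q : Submodule R V}, IsCompl p q → p = ⊥ ∨ q = ⊥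

theorem IsIndecomposable.bijective_of_comp_eq_id [Nontrivial W] (hV : IsIndecomposable R V)
    {f : V →ₗ[R] W} {s : W →ₗ[R] V} (hfs : f ∘ₗ s = LinearMap.id) : Function.Bijective f := by
  have hleft : Function.LeftInverse f s := LinearMap.congr_fun hfs
  have hidem : IsIdempotentElem (s ∘ₗ f) := LinearMap.ext fun v => congrArg s (hleft (f v))
  have hne : (s ∘ₗ f).range ≠ ⊥ := by
    rw [LinearMap.range_comp_of_range_eq_top s (LinearMap.range_eq_top.mpr hleft.surjective)]
    intro hbot
    obtain ⟨w, hw⟩ := exists_ne (0 : W)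
    exact hw (hleft.injective (by rw [LinearMap.range_eq_bot.mp hbot]; rfl))
  have hker : (s ∘ₗ f).ker = ⊥ :=
    (hV.eq_bot_or_eq_bot (LinearMap.IsIdempotentElem.isCompl hidem)).resolve_left hne
  exact ⟨.of_comp (LinearMap.ker_eq_bot.mp hker), hleft.surjective⟩

end Ring

section CommRing

variable {R V : Type*} [CommRing R] [AddCommGroup V] [Module R V]

theorem IsIndecomposable.nonempty_linearEquiv_of_free {S : Type*} [Ring S] [Nontrivial S]
    [Algebra R S] [Module S V] [IsScalarTower R S V] [Module.Free S V] (hV : IsIndecomposable R V) :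
    Nonempty (V ≃ₗ[R] S) := by
  have := hV.nontrivial
  let b := Module.Free.chooseBasis S V
  obtain ⟨i⟩ := b.index_nonempty
  have hsplit : (b.coord i).restrictScalars R ∘ₗ
      (LinearMap.toSpanSingleton S V (b i)).restrictScalars R = LinearMap.id := by
    ext c
    simp
  exact ⟨.ofBijective _ (hV.bijective_of_comp_eq_id hsplit)⟩

theorem projective_quotient_of_forall_exists_section (I : Ideal R) [Module (R ⧸ I) V]
    [IsScalarTower R (R ⧸ I) V] [Module.Finite R V]
    (hsplit : ∀ (t : ℕ) (q : (Fin t → R ⧸ I) →ₗ[R] V), Function.Surjective q →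
      ∃ s : V →ₗ[R] (Fin t → R ⧸ I), q ∘ₗ s = LinearMap.id) :
    Module.Projective (R ⧸ I) V := by
  have := Module.Finite.of_restrictScalars_finite R (R ⧸ I) V
  obtain ⟨t, q, hq⟩ := Module.Finite.exists_fin' (R ⧸ I) V
  obtain ⟨s, hs⟩ := hsplit t (q.restrictScalars R) hq
  refine .of_split (s.extendScalarsOfSurjective Ideal.Quotient.mk_surjective) q ?_
  ext v
  exact LinearMap.congr_fun hs v

theorem IsIndecomposable.nonempty_linearEquiv_quotient (hV : IsIndecomposable R V) {I : Ideal R}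
    [IsLocalRing (R ⧸ I)] [Module.Finite R V] (hI : Module.IsTorsionBySet R V I)
    (hsplit : ∀ (t : ℕ) (q : (Fin t → R ⧸ I) →ₗ[R] V), Function.Surjective q →
      ∃ s : V →ₗ[R] (Fin t → R ⧸ I), q ∘ₗ s = LinearMap.id) :
    Nonempty (V ≃ₗ[R] R ⧸ I) := by
  let _ := hI.module
  have := Module.Finite.of_restrictScalars_finite R (R ⧸ I) V
  have := projective_quotient_of_forall_exists_section I hsplit
  have : Module.Free (R ⧸ I) V := Module.free_of_flat_of_isLocalRing
  exact hV.nonempty_linearEquiv_of_free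

theorem isLocalRing_quotient_pow_of_isMaximal (I : Ideal R) [I.IsMaximal] {i : ℕ} (hi : i ≠ 0) :
    IsLocalRing (R ⧸ I ^ i) := by
  have : Nontrivial (R ⧸ I ^ i) := Ideal.Quotient.nontrivial_iff.mpr fun h =>
    Ideal.IsMaximal.ne_top ‹_› (top_le_iff.mp (h ▸ Ideal.pow_le_self hi))
  refine .of_isUnit_or_isUnit_one_sub_self fun a => ?_
  obtain ⟨x, rfl⟩ := Ideal.Quotient.mk_surjective a
  rw [← map_one (Ideal.Quotient.mk (I ^ i)), ← map_sub,
    Ideal.Quotient.isUnit_mk_pow_iff_notMem I hi, Ideal.Quotient.isUnit_mk_pow_iff_notMem I hi]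
  by_contra! h
  exact (I.ne_top_iff_one.mp (Ideal.IsMaximal.ne_top ‹_›)) (by simpa using I.add_mem h.1 h.2)

end CommRing

theorem isLocalRing_Bq (k : Type) [Field k] {i : ℕ} (hi : i ≠ 0) : IsLocalRing (Bq k i) := by
  have : (Ideal.span {(X : Polynomial k)}).IsMaximal :=
    PrincipalIdealRing.isMaximal_of_irreducible irreducible_X
  have hlocal := isLocalRing_quotient_pow_of_isMaximal (Ideal.span {(X : Polynomial k)}) hi
  rwa [Ideal.span_singleton_pow] at hlocal

namespace SPair

variable {k : Type} [Field k] {m n : ℕ}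

theorem relProjective_pairZero : (pairZero k m n n le_rfl).RelProjective := by
  intro N N' g hg _ (h : Bq k n →ₗ[Polynomial k] N'.B) _
  obtain ⟨y, hy⟩ := hg (h (Submodule.Quotient.mk 1))
  obtain ⟨h', hcomp, -⟩ := exists_comp_eq_and_range_le_span (Ideal.span {X ^ n}) g h y
    ((Ideal.span_singleton_le_iff_mem _).mpr (N.bound y)) hy
  exact ⟨h', hcomp, (Submodule.map_bot h').trans_le bot_le⟩

theorem relProjective_pairRm (hmn : m ≤ n) : (pairRm k m n hmn).RelProjective := by
  intro N N' g _ hgA (h : Bq k m →ₗ[Polynomial k] N'.B) hh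
  obtain ⟨y, hyA, hy⟩ : h (Submodule.Quotient.mk 1) ∈ N.A.map g :=
    hgA ▸ hh ⟨(Submodule.Quotient.mk 1 : Bq k m), trivial, rfl⟩
  obtain ⟨h', hcomp, hrange⟩ := exists_comp_eq_and_range_le_span (Ideal.span {X ^ m}) g h y
    ((Ideal.span_singleton_le_iff_mem _).mpr (N.subBound y hyA)) hy
  refine ⟨h', hcomp, LinearMap.map_le_range.trans (hrange.trans ?_)⟩
  rwa [Submodule.span_singleton_le_iff_mem]

theorem RelProjective.exists_section {M : SPair k m n} (hM : M.RelProjective) {V : Type}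
    [AddCommGroup V] [Module (Polynomial k) V] [Module.Finite (Polynomial k) V]
    (hV : ∀ v : V, (X : Polynomial k) ^ n • v = 0) {A' : Submodule (Polynomial k) V}
    (hA' : ∀ a ∈ A', (X : Polynomial k) ^ m • a = 0) {g : V →ₗ[Polynomial k] M.B}
    (hg : Function.Surjective g) (hgA : A'.map g = M.A) :
    ∃ s : M.B →ₗ[Polynomial k] V, g ∘ₗ s = LinearMap.id ∧ M.A.map s ≤ A' :=
  hM { B := V, bound := hV, A := A', subBound := hA' } M g hg hgA LinearMap.id
    (Submodule.map_id M.A).le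

theorem RelProjective.exists_isCompl {M : SPair k m n} (hM : M.RelProjective) :
    ∃ C : Submodule (Polynomial k) M.B, IsCompl M.A C := by
  let add : M.A × M.B →ₗ[Polynomial k] M.B := M.A.subtype.coprod LinearMap.id
  have hadd : Function.Surjective add := fun b => ⟨(0, b), by simp [add]⟩
  have hadd_inl : (LinearMap.inl (Polynomial k) M.A M.B).range.map add = M.A := by
    rw [← LinearMap.range_comp, LinearMap.coprod_inl, Submodule.range_subtype]
  have hinl : ∀ a ∈ (LinearMap.inl (Polynomial k) M.A M.B).range,
      (X : Polynomial k) ^ m • a = 0 := by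
    rintro _ ⟨a, rfl⟩
    have ha : (X : Polynomial k) ^ m • a = 0 := Subtype.ext (M.subBound a a.2)
    rw [← map_smul, ha, map_zero]
  obtain ⟨s, hs, hsA⟩ := hM.exists_section
    (fun v => Prod.ext (Subtype.ext (M.bound v.1)) (M.bound v.2)) hinl hadd hadd_inl
  refine ⟨(LinearMap.fst (Polynomial k) M.A M.B ∘ₗ s).ker, LinearMap.isCompl_of_proj fun a => ?_⟩
  obtain ⟨a', ha'⟩ := hsA (Submodule.mem_map_of_mem a.2)
  have haa' : a' = a := by
    apply Subtype.ext
    calc (a' : M.B) = add (LinearMap.inl _ _ _ a') := by simp [add]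
      _ = add (s a) := by rw [ha']
      _ = a := LinearMap.congr_fun hs a
  rw [LinearMap.comp_apply, ← ha', haa', LinearMap.inl_apply, LinearMap.fst_apply]

theorem Indec.A_eq_bot_or_eq_top {M : SPair k m n} (hM : M.Indec) (hproj : M.RelProjective) :
    M.A = ⊥ ∨ M.A = ⊤ := by
  obtain ⟨C, hC⟩ := hproj.exists_isCompl
  have hdecomp : M.A = M.A ⊓ M.A ⊔ M.A ⊓ C := by rw [inf_idem, sup_inf_self]
  refine (hM.2 M.A C hC.inf_eq_bot hC.sup_eq_top hdecomp).imp_right fun hbot => ?_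
  rw [← hC.sup_eq_top, hbot, sup_bot_eq]

theorem Indec.isIndecomposable {M : SPair k m n} (hM : M.Indec) (hA : M.A = ⊥ ∨ M.A = ⊤) :
    IsIndecomposable (Polynomial k) M.B where
  nontrivial := let ⟨b, hb⟩ := hM.1; ⟨b, 0, hb⟩
  eq_bot_or_eq_bot {p q} hpq := hM.2 p q hpq.inf_eq_bot hpq.sup_eq_top <| by
    rcases hA with hA | hA <;> simp [hA, hpq.sup_eq_top]

theorem Indec.iso_pairZero {M : SPair k m n} (hM : M.Indec) (hproj : M.RelProjective) (hn : n ≠ 0)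
    (hA : M.A = ⊥) : M.Iso (pairZero k m n n le_rfl) := by
  have := isLocalRing_Bq k hn
  have hsplit (t : ℕ) (q : (Fin t → Bq k n) →ₗ[Polynomial k] M.B) (hq : Function.Surjective q) :
      ∃ s : M.B →ₗ[Polynomial k] (Fin t → Bq k n), q ∘ₗ s = LinearMap.id := by
    obtain ⟨s, hs, -⟩ := hproj.exists_section (A' := ⊥)
      (fun v => funext fun j => Bq_bound k le_rfl (v j))
      (fun v hv => by rw [(Submodule.mem_bot _).mp hv, smul_zero]) hq
      (by rw [Submodule.map_bot, hA])
    exact ⟨s, hs⟩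
  obtain ⟨e⟩ := (hM.isIndecomposable (.inl hA)).nonempty_linearEquiv_quotient
    ((Module.isTorsionBySet_span_singleton_iff _).mpr fun b => M.bound b) hsplit
  exact ⟨e, by rw [hA, Submodule.map_bot]; rfl⟩

theorem Indec.iso_pairRm {M : SPair k m n} (hM : M.Indec) (hproj : M.RelProjective) (hm : m ≠ 0)
    (hmn : m ≤ n) (hA : M.A = ⊤) : M.Iso (pairRm k m n hmn) := by
  have := isLocalRing_Bq k hm
  have hsplit (t : ℕ) (q : (Fin t → Bq k m) →ₗ[Polynomial k] M.B) (hq : Function.Surjective q) :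
      ∃ s : M.B →ₗ[Polynomial k] (Fin t → Bq k m), q ∘ₗ s = LinearMap.id := by
    obtain ⟨s, hs, -⟩ := hproj.exists_section (A' := ⊤)
      (fun v => funext fun j => Bq_bound k hmn (v j))
      (fun v _ => funext fun j => Bq_bound k le_rfl (v j)) hq
      (by rw [Submodule.map_top, hA, LinearMap.range_eq_top.mpr hq])
    exact ⟨s, hs⟩
  have hbound (b : M.B) : (X : Polynomial k) ^ m • b = 0 := M.subBound b (hA ▸ Submodule.mem_top)
  obtain ⟨e⟩ := (hM.isIndecomposable (.inr hA)).nonempty_linearEquiv_quotient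
    ((Module.isTorsionBySet_span_singleton_iff _).mpr hbound) hsplit
  exact ⟨e, by rw [hA]; exact (Submodule.map_top _).trans e.range⟩

end SPair

/-- **Relatively projective objects of `Sₘ(k[T]/Tⁿ)`.**  With `R = k[X]/(Xⁿ)` and
`Rₘ = k[X]/(Xᵐ)`, the objects `(0 ⊆ R)` and `(Rₘ ⊆ Rₘ)` are relatively projective, and
conversely every indecomposable relatively projective object of `Sₘ(k[T]/Tⁿ)` is isomorphic
to one of them. -/
theorem relatively_projective_objects (k : Type) [Field k] (m n : ℕ)
    (hm : 0 < m) (hmn : m ≤ n) :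
    (pairZero k m n n le_rfl).RelProjective ∧
    (pairRm k m n hmn).RelProjective ∧
    (∀ M : SPair k m n, M.Indec → M.RelProjective →
      M.Iso (pairZero k m n n le_rfl) ∨ M.Iso (pairRm k m n hmn)) := by
  refine ⟨SPair.relProjective_pairZero, SPair.relProjective_pairRm hmn, fun M hM hproj => ?_⟩
  rcases hM.A_eq_bot_or_eq_top hproj with hA | hA
  · exact .inl (hM.iso_pairZero hproj (hm.trans_le hmn).ne' hA)
  · exact .inr (hM.iso_pairRm hproj hm.ne' hmn hA)

end
end

section
/- Let k be a field, m ≤ n positive integers, R = k[X]/(X^n), and let (f : A → B) be an object of the homomorphism category H_m(k[T]/T^n). (1) Let f̄ : A → im f be the corestriction of f; then the morphism (f̄, id_B) from (f : A → B) to the object (inclusion : im f → B) of S_m(k[T]/T^n) is a left S_m-approximation: every morphism in H_m(k[T]/T^n) from (f : A → B) to an object (ι : A' → B') with ι injective factors through (f̄, id_B). (2) Let I be a finite-dimensional injective R-module and e : A → I an R-linear map whose restriction to ker f is injective; then g = (f, e) : A → B ⊕ I is injective, so (g : A → B ⊕ I) is an object of S_m(k[T]/T^n), and the morphism (id_A,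 pr_B) from (g : A → B ⊕ I) to (f : A → B) is a right S_m-approximation: every morphism in H_m(k[T]/T^n) from an object (ι : A' → B') with ι injective to (f : A → B) factors through (id_A, pr_B). -/
open Polynomial

noncomputable section

/-- The ring `R = k[X]/(Xⁿ)`. -/
abbrev Rn (k : Type) [Field k] (n : ℕ) : Type :=
  Polynomial k ⧸ (Ideal.span {(X : Polynomial k) ^ n} : Ideal (Polynomial k))

/-- The image of `X` in `R = k[X]/(Xⁿ)`. -/
def xR (k : Type) [Field k] (n : ℕ) : Rn k n :=
  Ideal.Quotient.mk (Ideal.span {(X : Polynomial k) ^ n}) (X : Polynomial k)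

/-!
A morphism from `f : A → B` to an injection `ι` fills in diagonally: `A → im f` is surjective and
`ι` is injective, so the square on `im f` acquires a filler `im f → A'`. Dually, lifting
`β : B' → B` to `B × I` amounts to extending `e ∘ α : A' → I` along the injection `ι`, and the
injectivity of `I` provides the extension.
-/

universe u v w u' v' w'

section Semiring

variable {R : Type*} [Semiring R] {A B C M N : Type*}
  [AddCommMonoid A] [AddCommMonoid B] [AddCommMonoid C] [AddCommMonoid M] [AddCommMonoid N]
  [Module R A] [Module R B] [Module R C] [Module R M] [Module R N]

theorem exists_comp_eq_of_injective_of_range_le {ι : M →ₗ[R] N} {γ : C →ₗ[R] N}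
    (hι : Function.Injective ι) (hγ : LinearMap.range γ ≤ LinearMap.range ι) :
    ∃ δ : C →ₗ[R] M, ι ∘ₗ δ = γ := by
  let γ' : C →ₗ[R] LinearMap.range ι := γ.codRestrict _ fun c ↦ hγ ⟨c, rfl⟩
  refine ⟨(LinearEquiv.ofInjective ι hι).symm ∘ₗ γ', LinearMap.ext fun c ↦ ?_⟩
  exact congrArg Subtype.val ((LinearEquiv.ofInjective ι hι).apply_symm_apply (γ' c))

theorem exists_diagonal_of_surjective_of_injective {π : A →ₗ[R] C} {ι : M →ₗ[R] N}
    (hπ : Function.Surjective π) (hι : Function.Injective ι) {α : A →ₗ[R] M} {γ : C →ₗ[R] N}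
    (h : ι ∘ₗ α = γ ∘ₗ π) :
    ∃ δ : C →ₗ[R] M, ι ∘ₗ δ = γ ∧ δ ∘ₗ π = α := by
  have hγ : LinearMap.range γ ≤ LinearMap.range ι := by
    rw [← LinearMap.range_comp_of_range_eq_top γ (LinearMap.range_eq_top.2 hπ), ← h]
    exact LinearMap.range_comp_le_range α ι
  obtain ⟨δ, hδ⟩ := exists_comp_eq_of_injective_of_range_le hι hγ
  refine ⟨δ, hδ, (LinearMap.cancel_left hι).1 ?_⟩
  rw [← LinearMap.comp_assoc, hδ, h]

end Semiring

section Ring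

variable {R : Type u} [Ring R] {A : Type v} {B : Type w}
  [AddCommGroup A] [AddCommGroup B] [Module R A] [Module R B]

theorem injective_prod_iff_injective_comp_subtype_ker {I : Type*} [AddCommGroup I] [Module R I]
    {f : A →ₗ[R] B} {e : A →ₗ[R] I} :
    Function.Injective (f.prod e) ↔ Function.Injective (e ∘ₗ (LinearMap.ker f).subtype) := by
  rw [← LinearMap.domRestrict, LinearMap.injective_domRestrict_iff, ← LinearMap.ker_eq_bot,
    LinearMap.ker_prod, disjoint_iff]

theorem exists_prod_comp_eq_of_injective {I : Type w'} [AddCommGroup I] [Module R I]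
    [Small.{w'} R] [Module.Injective R I] {M N : Type*} [AddCommGroup M] [AddCommGroup N]
    [Module R M] [Module R N] {f : A →ₗ[R] B} (e : A →ₗ[R] I) {ι : M →ₗ[R] N}
    (hι : Function.Injective ι) {α : M →ₗ[R] A} {β : N →ₗ[R] B} (h : f ∘ₗ α = β ∘ₗ ι) :
    ∃ β' : N →ₗ[R] B × I, f.prod e ∘ₗ α = β' ∘ₗ ι ∧ LinearMap.fst R B I ∘ₗ β' = β := by
  obtain ⟨γ, hγ⟩ := Module.Injective.extension_property R I M N ι hι (e ∘ₗ α)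
  refine ⟨β.prod γ, ?_, LinearMap.fst_prod β γ⟩
  rw [LinearMap.prod_comp, LinearMap.prod_comp, h, hγ]

theorem approximations_in_Hm_general {r : R} (hA : ∀ a : A, r • a = 0) (f : A →ₗ[R] B) :
    ((LinearMap.range f).subtype ∘ₗ f.rangeRestrict = f ∧
      (∀ x ∈ LinearMap.range f, r • x = 0) ∧
      (∀ (A' : Type u') (B' : Type v') [AddCommGroup A'] [AddCommGroup B']
          [Module R A'] [Module R B'] (ι : A' →ₗ[R] B'), Function.Injective ι →
        ∀ (α : A →ₗ[R] A') (β : B →ₗ[R] B'), ι ∘ₗ α = β ∘ₗ f →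
        ∃ (α' : LinearMap.range f →ₗ[R] A') (β' : B →ₗ[R] B'),
          ι ∘ₗ α' = β' ∘ₗ (LinearMap.range f).subtype ∧
          α' ∘ₗ f.rangeRestrict = α ∧ β' ∘ₗ LinearMap.id = β)) ∧
    (∀ (I : Type w') [AddCommGroup I] [Module R I] [Small.{w'} R] [Module.Injective R I]
        (e : A →ₗ[R] I), Function.Injective (e ∘ₗ (LinearMap.ker f).subtype) →
      Function.Injective (f.prod e) ∧
      (∀ (A' : Type u') (B' : Type v') [AddCommGroup A'] [AddCommGroup B']
          [Module R A'] [Module R B'] (ι : A' →ₗ[R] B'), Function.Injective ι →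
        ∀ (α : A' →ₗ[R] A) (β : B' →ₗ[R] B), f ∘ₗ α = β ∘ₗ ι →
        ∃ (α'' : A' →ₗ[R] A) (β'' : B' →ₗ[R] B × I),
          f.prod e ∘ₗ α'' = β'' ∘ₗ ι ∧
          LinearMap.id ∘ₗ α'' = α ∧ LinearMap.fst R B I ∘ₗ β'' = β)) := by
  refine ⟨⟨rfl, ?_, ?_⟩, fun I _ _ _ _ e he ↦
    ⟨injective_prod_iff_injective_comp_subtype_ker.2 he, ?_⟩⟩
  · rintro _ ⟨a, rfl⟩
    rw [← map_smul, hA, map_zero]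
  · intro A' B' _ _ _ _ ι hι α β h
    obtain ⟨α', hι', hα'⟩ :=
      exists_diagonal_of_surjective_of_injective f.surjective_rangeRestrict hι
        (γ := β ∘ₗ (LinearMap.range f).subtype) h
    exact ⟨α', β, hι', hα', β.comp_id⟩
  · intro A' B' _ _ _ _ ι hι α β h
    obtain ⟨β', hι', hβ'⟩ := exists_prod_comp_eq_of_injective e hι h
    exact ⟨α, β', hι', α.id_comp, hβ'⟩

end Ring

/-- **Minimal approximations in `H_m(k[T]/Tⁿ)` by objects of `Sₘ(k[T]/Tⁿ)`.**
Let `(f : A → B)` be an object of the homomorphism category `H_m(k[T]/Tⁿ)`, i.e. an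
`R`-linear map between finite-dimensional `R`-modules with `Xᵐ • A = 0` (`R = k[X]/(Xⁿ)`).

(1) The corestriction `f̄ : A → im f` together with `id_B` is a morphism to the object
`(im f ⊆ B)` of `Sₘ(k[T]/Tⁿ)`, and it is a left `Sₘ`-approximation: every morphism of
`H_m(k[T]/Tⁿ)` from `(f : A → B)` to an object `(ι : A' → B')` with `ι` injective factors
through it.

(2) If `I` is a finite-dimensional injective `R`-module and `e : A → I` restricts to an
injection on `ker f`, then `g = (f, e) : A → B ⊕ I` is injective — so `(g : A → B ⊕ I)` is
an object of `Sₘ(k[T]/Tⁿ)` — and the morphism `(id_A, pr_B)` from `(g : A → B ⊕ I)` to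
`(f : A → B)` is a right `Sₘ`-approximation: every morphism of `H_m(k[T]/Tⁿ)` from an
object `(ι : A' → B')` with `ι` injective to `(f : A → B)` factors through it. -/
theorem approximations_in_Hm (k : Type) [Field k] (m n : ℕ) (hm : 0 < m) (hmn : m ≤ n)
    (A B : Type) [AddCommGroup A] [AddCommGroup B]
    [Module (Rn k n) A] [Module (Rn k n) B]
    [Module.Finite (Rn k n) A] [Module.Finite (Rn k n) B]
    (hA : ∀ a : A, xR k n ^ m • a = 0)
    (f : A →ₗ[Rn k n] B) :
    -- (1) the left approximation
    ((LinearMap.range f).subtype ∘ₗ f.rangeRestrict = f ∧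
      (∀ x ∈ LinearMap.range f, xR k n ^ m • x = 0) ∧
      (∀ (A' B' : Type) [AddCommGroup A'] [AddCommGroup B']
          [Module (Rn k n) A'] [Module (Rn k n) B']
          [Module.Finite (Rn k n) A'] [Module.Finite (Rn k n) B'],
        (∀ a : A', xR k n ^ m • a = 0) →
        ∀ (ι : A' →ₗ[Rn k n] B'), Function.Injective ι →
        ∀ (α : A →ₗ[Rn k n] A') (β : B →ₗ[Rn k n] B'), ι ∘ₗ α = β ∘ₗ f →
        ∃ (α' : LinearMap.range f →ₗ[Rn k n] A') (β' : B →ₗ[Rn k n] B'),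
          ι ∘ₗ α' = β' ∘ₗ (LinearMap.range f).subtype ∧
          α' ∘ₗ f.rangeRestrict = α ∧ β' ∘ₗ LinearMap.id = β)) ∧
    -- (2) the right approximation
    (∀ (I : Type) [AddCommGroup I] [Module (Rn k n) I]
        [Module.Finite (Rn k n) I] [Module.Injective (Rn k n) I],
      ∀ e : A →ₗ[Rn k n] I, Function.Injective (e ∘ₗ (LinearMap.ker f).subtype) →
        Function.Injective (LinearMap.prod f e) ∧
        (∀ (A' B' : Type) [AddCommGroup A'] [AddCommGroup B']
            [Module (Rn k n) A'] [Module (Rn k n) B']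
            [Module.Finite (Rn k n) A'] [Module.Finite (Rn k n) B'],
          (∀ a : A', xR k n ^ m • a = 0) →
          ∀ (ι : A' →ₗ[Rn k n] B'), Function.Injective ι →
          ∀ (α : A' →ₗ[Rn k n] A) (β : B' →ₗ[Rn k n] B), f ∘ₗ α = β ∘ₗ ι →
          ∃ (α'' : A' →ₗ[Rn k n] A) (β'' : B' →ₗ[Rn k n] B × I),
            LinearMap.prod f e ∘ₗ α'' = β'' ∘ₗ ι ∧
            LinearMap.id ∘ₗ α'' = α ∧ LinearMap.fst (Rn k n) B I ∘ₗ β'' = β)) := by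
  obtain ⟨⟨hfactor, htorsion, hleft⟩, hright⟩ := approximations_in_Hm_general hA f
  exact ⟨⟨hfactor, htorsion, fun A' B' _ _ _ _ _ _ _ ↦ hleft A' B'⟩,
    fun I _ _ _ _ e he ↦ (hright I e he).imp_right fun h A' B' _ _ _ _ _ _ _ ↦ h A' B'⟩

end
end
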